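/- In the setting where End_ℂ(M) = ρ(A) for a finite-dimensional simple module M over an H-graded algebra A with quantum torus operators T₁,...,T_r, and M = N ⊗ (⊕_{p∈H} V^p) is the isotypic decomposition, the eigenspace of End_ℂ(M) with eigenvalue h(η_j) under conjugation by T_j (for all j simultaneously) equals Σ_{a∈ℤ^r} T^a ⊗ (⊕_{p∈H} Hom_ℂ(V^p, V^{p+h+γ(a)})), where γ: ℤ^r → H is the homomorphism defined by γ(a)(η^b) = Π_{i,j} q_{ij}^{a_i b_j}. -/

import Mathlib

open DirectSum TensorProduct

/-- The monomial `S^a = S₁^{a₁} ⋯ S_r^{a_r}`. -/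
noncomputable def Sprod {N : Type*} [AddCommGroup N] [Module ℂ N]
    {r : ℕ} (S : Fin r → N ≃ₗ[ℂ] N) (a : Fin r → ℤ) : N ≃ₗ[ℂ] N :=
  (List.ofFn fun i => S i ^ a i).prod

/-- The quantum-torus generator `t_j` acting on `M = ⊕_{p∈H} N ⊗ V^p` by
`S j ⊗ p(η_j)·id` on the `p`-component. -/
noncomputable def torusOp {Hhat : Type*} [CommGroup Hhat] [DecidableEq (Hhat →* ℂˣ)]
    {N : Type*} [AddCommGroup N] [Module ℂ N]
    (V : (Hhat →* ℂˣ) → Type*) [∀ p, AddCommGroup (V p)] [∀ p, Module ℂ (V p)]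
    {r : ℕ} (η : Fin r → Hhat) (S : Fin r → N ≃ₗ[ℂ] N) (j : Fin r) :
    (⨁ p : Hhat →* ℂˣ, N ⊗[ℂ] V p) →ₗ[ℂ] ⨁ p : Hhat →* ℂˣ, N ⊗[ℂ] V p :=
  DirectSum.toModule ℂ (Hhat →* ℂˣ) _ fun p =>
    (DirectSum.lof ℂ (Hhat →* ℂˣ) (fun p => N ⊗[ℂ] V p) p).comp
      (TensorProduct.map (S j : N →ₗ[ℂ] N) ((p (η j) : ℂ) • LinearMap.id))

/-- The operator `T^a ⊗ (⊕_p f_p)` on `M = ⊕_{p∈H} N ⊗ V^p`, sending the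
`p`-component to the `p·h·γ(a)`-component via `S^a ⊗ f_p`, where
`f_p : V^p → V^{p·h·γ(a)}`. -/
noncomputable def homogOp {Hhat : Type*} [CommGroup Hhat] [DecidableEq (Hhat →* ℂˣ)]
    {N : Type*} [AddCommGroup N] [Module ℂ N]
    (V : (Hhat →* ℂˣ) → Type*) [∀ p, AddCommGroup (V p)] [∀ p, Module ℂ (V p)]
    {r : ℕ} (S : Fin r → N ≃ₗ[ℂ] N)
    (γ : (Fin r → ℤ) → (Hhat →* ℂˣ)) (h : Hhat →* ℂˣ) (a : Fin r → ℤ)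
    (f : ∀ p : Hhat →* ℂˣ, V p →ₗ[ℂ] V (p * h * γ a)) :
    (⨁ p : Hhat →* ℂˣ, N ⊗[ℂ] V p) →ₗ[ℂ] ⨁ p : Hhat →* ℂˣ, N ⊗[ℂ] V p :=
  DirectSum.toModule ℂ (Hhat →* ℂˣ) _ fun p =>
    (DirectSum.lof ℂ (Hhat →* ℂˣ) (fun p => N ⊗[ℂ] V p) (p * h * γ a)).comp
      (TensorProduct.map ((Sprod S a : N ≃ₗ[ℂ] N) : N →ₗ[ℂ] N) (f p))


theorem mul_prod_ofFn_zpow_eq_of_mul_eq {G C : Type*} [Group G] [CommGroup C] (φ : C →* G)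
    (hφ : ∀ c g, Commute (φ c) g) (g : G) {r : ℕ} (s : Fin r → G) (c : Fin r → C)
    (h : ∀ i, g * s i = φ (c i) * (s i * g)) (a : Fin r → ℤ) :
    g * (List.ofFn fun i => s i ^ a i).prod =
      φ (∏ i, c i ^ a i) * ((List.ofFn fun i => s i ^ a i).prod * g) := by
  have hpow (i : Fin r) (n : ℤ) : g * s i ^ n = φ (c i ^ n) * (s i ^ n * g) := by
    have hconj : g * s i * g⁻¹ = φ (c i) * s i := by rw [h]; group
    have := conj_zpow (i := n) (a := g) (b := s i)
    rw [hconj, (hφ (c i) (s i)).mul_zpow, ← map_zpow] at this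
    rw [← mul_assoc, this]; group
  clear h
  induction r with
  | zero => simp
  | succ r ih =>
    rw [List.ofFn_succ, List.prod_cons, ← mul_assoc, hpow, mul_assoc, mul_assoc,
      ih _ _ _ fun i n => hpow i.succ n, Fin.prod_univ_succ, map_mul, mul_assoc]
    congr 1
    rw [← mul_assoc, ← (hφ _ (s 0 ^ a 0)).eq]
    simp only [mul_assoc]

theorem exists_mul_prod_ofFn_zpow_eq {G C : Type*} [Group G] [CommGroup C] (φ : C →* G)
    (hφ : ∀ c g, Commute (φ c) g) {r : ℕ} (s : Fin r → G) (c : Fin r → Fin r → C)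
    (h : ∀ i j, s i * s j = φ (c i j) * (s j * s i)) (j : Fin r) (a : Fin r → ℤ) :
    ∃ d : C, s j * (List.ofFn fun i => s i ^ a i).prod =
      φ d * (List.ofFn fun i => s i ^ (a + Pi.single j 1 : Fin r → ℤ) i).prod := by
  induction r with
  | zero => exact j.elim0
  | succ r ih =>
    simp only [List.ofFn_succ, List.prod_cons]
    cases j using Fin.cases with
    | zero =>
      refine ⟨1, ?_⟩
      have hs (i : Fin r) : (Pi.single 0 1 : Fin (r + 1) → ℤ) i.succ = 0 :=
        Pi.single_eq_of_ne (Fin.succ_ne_zero i) 1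
      simp only [Pi.add_apply, Pi.single_eq_same, hs, add_zero, map_one, one_mul]
      rw [← mul_assoc, ← zpow_one_add, add_comm (a 0)]
    | succ k =>
      obtain ⟨d, hd⟩ := ih (fun i => s i.succ) (fun i j => c i.succ j.succ)
        (fun i j => h _ _) k (fun i => a i.succ)
      have h0 := mul_prod_ofFn_zpow_eq_of_mul_eq φ hφ (s k.succ) (r := 1) (fun _ => s 0)
        (fun _ => c k.succ 0) (fun _ => h _ _) (fun _ => a 0)
      simp only [List.ofFn_succ, List.ofFn_zero, List.prod_cons, List.prod_nil, mul_one,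
        Finset.univ_unique, Finset.prod_singleton] at h0
      have hs (i : Fin r) : (Pi.single k.succ 1 : Fin (r + 1) → ℤ) i.succ =
          (Pi.single k 1 : Fin r → ℤ) i := by
        simp [Pi.single_apply]
      have hz : (Pi.single k.succ 1 : Fin (r + 1) → ℤ) 0 = 0 :=
        Pi.single_eq_of_ne (Fin.succ_ne_zero k).symm 1
      refine ⟨c k.succ 0 ^ a 0 * d, ?_⟩
      simp only [Pi.add_apply, hs, hz, add_zero] at hd ⊢
      rw [← mul_assoc, h0, mul_assoc, mul_assoc, hd, map_mul, mul_assoc]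
      congr 1
      rw [← mul_assoc, ← (hφ d (s 0 ^ a 0)).eq, mul_assoc]

/-- The joint eigenspace for conjugation by the elements `u j`, with eigenvalues `χ j`. -/
def conjEigenspace {K R ι : Type*} [Field K] [Ring R] [Algebra K R] (u : ι → R) (χ : ι → K) :
    Submodule K R where
  carrier := {x | ∀ j, u j * x = χ j • (x * u j)}
  add_mem' hx hy j := by rw [mul_add, hx j, hy j, add_mul, smul_add]
  zero_mem' j := by simp
  smul_mem' c x hx j := by rw [mul_smul_comm, hx j, smul_mul_assoc, smul_comm]

/-- Joint eigenspaces of conjugation by units that commute up to scalars are independent. -/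
theorem iSupIndep_conjEigenspace {K R ι : Type*} [Field K] [Ring R] [Algebra K R]
    (u : ι → Rˣ) (c : ι → ι → Kˣ) (hu : ∀ i j, (u i * u j : R) = (c i j : K) • (u j * u i : R)) :
    iSupIndep fun χ : ι → K => conjEigenspace (fun j => (u j : R)) χ := by
  let C : ι → Module.End K R := fun j =>
    LinearMap.mulLeft K (u j : R) * LinearMap.mulRight K (↑(u j)⁻¹ : R)
  have hC (j : ι) (x : R) : C j x = u j * x * ↑(u j)⁻¹ := by simp [C, mul_assoc]
  have hinv (i j : ι) :
      (↑(u j)⁻¹ * ↑(u i)⁻¹ : R) = (↑(c i j)⁻¹ : K) • (↑(u i)⁻¹ * ↑(u j)⁻¹ : R) := by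
    have h1 : ((u i * u j : Rˣ) : R) = (c i j : K) • ((u j * u i : Rˣ) : R) := by
      simpa using hu i j
    have h2 : (c i j : K) • (↑(u j)⁻¹ * ↑(u i)⁻¹ : R) = ↑(u i)⁻¹ * ↑(u j)⁻¹ := by
      have : (↑(u i * u j)⁻¹ : R) * ((c i j : K) • ((u j * u i : Rˣ) : R)) * ↑(u j * u i)⁻¹ =
        ↑(u j * u i)⁻¹ := by rw [← h1, Units.inv_mul, one_mul]
      rw [mul_smul_comm, smul_mul_assoc, mul_assoc, Units.mul_inv, mul_one] at this
      simpa using this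
    rw [← h2, smul_smul]; simp
  have hcomm (i j : ι) : Commute (C i) (C j) := by
    ext x
    simp only [Module.End.mul_apply, hC]
    calc (u i * (u j * x * ↑(u j)⁻¹) * ↑(u i)⁻¹ : R)
        = (u i * u j) * x * (↑(u j)⁻¹ * ↑(u i)⁻¹) := by simp only [mul_assoc]
      _ = (u j * u i) * x * (↑(u i)⁻¹ * ↑(u j)⁻¹) := by
          rw [hu i j, hinv i j]; simp [smul_smul]
      _ = _ := by simp only [mul_assoc]
  refine (Module.End.independent_iInf_maxGenEigenspace_of_forall_mapsTo C fun i j μ =>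
    Module.End.mapsTo_maxGenEigenspace_of_comm (hcomm j i) μ).mono fun χ x hx => ?_
  simp only [Submodule.mem_iInf]
  refine fun j => (C j).genEigenspace (χ j) |>.mono (le_top (a := 1)) ?_
  change x ∈ (C j).eigenspace (χ j)
  have hxj : u j * x = χ j • (x * u j) := hx j
  rw [Module.End.mem_eigenspace_iff, hC, hxj, smul_mul_assoc, mul_assoc]
  simp

/-- In a complete lattice which is modular, a family below an independent one with supremum `⊤`
agrees with it. -/
theorem iSupIndep.eq_of_le_of_iSup_eq_top {α κ : Type*} [CompleteLattice α] [IsModularLattice α]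
    {E G : κ → α} (hE : iSupIndep E) (hle : G ≤ E) (htop : ⨆ k, G k = ⊤) : G = E := by
  funext k
  refine le_antisymm (hle k) ?_
  have hsup : G k ⊔ ⨆ (j) (_ : j ≠ k), E j = ⊤ := by
    rw [eq_top_iff, ← htop]
    refine iSup_le fun j => ?_
    by_cases hj : j = k
    · exact hj ▸ le_sup_left
    · exact (hle j).trans (le_sup_of_le_right (le_iSup₂_of_le j hj le_rfl))
  have hdisj := (hE k).eq_bot
  calc E k = (G k ⊔ ⨆ (j) (_ : j ≠ k), E j) ⊓ E k := by rw [hsup, top_inf_eq]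
    _ = G k ⊔ (⨆ (j) (_ : j ≠ k), E j) ⊓ E k := sup_inf_assoc_of_le _ (hle k)
    _ ≤ G k := by rw [inf_comm, hdisj, sup_bot_eq]

theorem eq_conjEigenspace_of_le_of_iSup_eq_top {K R ι κ : Type*} [Field K] [Ring R] [Algebra K R]
    (u : ι → Rˣ) (c : ι → ι → Kˣ) (hu : ∀ i j, (u i * u j : R) = (c i j : K) • (u j * u i : R))
    (χ : κ → ι → K) (hχ : Function.Injective χ) (G : κ → Submodule K R)
    (hle : ∀ k, G k ≤ conjEigenspace (fun j => (u j : R)) (χ k)) (htop : ⨆ k, G k = ⊤) (k : κ) :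
    G k = conjEigenspace (fun j => (u j : R)) (χ k) :=
  congrFun (((iSupIndep_conjEigenspace u c hu).comp hχ).eq_of_le_of_iSup_eq_top hle htop) k

/-- **Burnside's theorem** on matrix algebras. -/
theorem Algebra.adjoin_eq_top_of_forall_invariant {K N : Type*} [Field K] [IsAlgClosed K]
    [AddCommGroup N] [Module K N] [FiniteDimensional K N] [Nontrivial N]
    (s : Set (Module.End K N))
    (hs : ∀ W : Submodule K N, (∀ f ∈ s, ∀ u ∈ W, f u ∈ W) → W = ⊥ ∨ W = ⊤) :
    Algebra.adjoin K s = ⊤ := by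
  let A := Algebra.adjoin K s
  have hsimple : IsSimpleModule A N := by
    rw [isSimpleModule_iff]
    refine { eq_bot_or_eq_top := fun W => ?_ }
    refine (hs (W.restrictScalars K) fun f hf u hu =>
      W.smul_mem (⟨f, Algebra.subset_adjoin hf⟩ : A) hu).imp ?_ ?_
    · simp
    · simp
  refine Algebra.eq_top_iff.mpr fun f => ?_
  change f ∈ A
  have hf (g : Module.End A N) (x : N) : f (g • x) = g • f x := by
    obtain ⟨c, rfl⟩ := (IsSimpleModule.algebraMap_end_bijective_of_isAlgClosed
      (A := A) (V := N) K).2 g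
    simp
  let F : Module.End (Module.End A N) N := { f with map_smul' := hf }
  obtain ⟨b, hb⟩ := (Module.finite_def (R := K) (M := N)).mp inferInstance
  obtain ⟨a, ha⟩ := jacobson_density (R := A) F b
  have : f = a := LinearMap.ext_on hb fun x hx => ha x hx
  exact this ▸ a.2

section QuantumTorus

variable {N : Type*} [AddCommGroup N] [Module ℂ N] {r : ℕ} (S : Fin r → N ≃ₗ[ℂ] N)
  (q : Fin r → Fin r → ℂˣ)

theorem commute_toModuleAut (c : ℂˣ) (g : N ≃ₗ[ℂ] N) :
    Commute (DistribMulAction.toModuleAut ℂ N c) g := by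
  refine LinearEquiv.ext fun x => ?_
  exact (map_smul g (c : ℂ) x).symm

variable {S q} in
theorem mul_eq_toModuleAut_mul (hrel : ∀ i j, ((S i : Module.End ℂ N) * S j) =
      (q i j : ℂ) • ((S j : Module.End ℂ N) * S i)) (i j : Fin r) :
    S i * S j = DistribMulAction.toModuleAut ℂ N (q i j) * (S j * S i) :=
  LinearEquiv.ext fun x => congr($(hrel i j) x)

variable {S q} in
theorem mul_Sprod (hrel : ∀ i j, ((S i : Module.End ℂ N) * S j) =
      (q i j : ℂ) • ((S j : Module.End ℂ N) * S i)) (j : Fin r) (a : Fin r → ℤ) :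
    (S j : Module.End ℂ N) * (Sprod S a : N ≃ₗ[ℂ] N) =
      ((∏ i, q j i ^ a i : ℂˣ) : ℂ) • ((Sprod S a : Module.End ℂ N) * S j) :=
  LinearMap.ext fun x => congr($(mul_prod_ofFn_zpow_eq_of_mul_eq
    (DistribMulAction.toModuleAut ℂ N) commute_toModuleAut (S j) S (q j)
    (mul_eq_toModuleAut_mul hrel j) a) x)

variable {S q} in
theorem exists_mul_Sprod (hrel : ∀ i j, ((S i : Module.End ℂ N) * S j) =
      (q i j : ℂ) • ((S j : Module.End ℂ N) * S i)) (j : Fin r) (a : Fin r → ℤ) :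
    ∃ d : ℂ, (S j : Module.End ℂ N) * (Sprod S a : N ≃ₗ[ℂ] N) =
      d • (Sprod S (a + Pi.single j 1) : Module.End ℂ N) := by
  obtain ⟨d, hd⟩ := exists_mul_prod_ofFn_zpow_eq
    (DistribMulAction.toModuleAut ℂ N) commute_toModuleAut S q (mul_eq_toModuleAut_mul hrel) j a
  exact ⟨d, LinearMap.ext fun x => congr($hd x)⟩

theorem Sprod_zero : Sprod S 0 = 1 := by
  simp [Sprod]

variable {S q} in
theorem span_range_Sprod_eq_top [FiniteDimensional ℂ N] [Nontrivial N]
    (hrel : ∀ i j, ((S i : Module.End ℂ N) * S j) =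
      (q i j : ℂ) • ((S j : Module.End ℂ N) * S i))
    (hN : ∀ W : Submodule ℂ N, (∀ i, ∀ u ∈ W, S i u ∈ W) → W = ⊥ ∨ W = ⊤) :
    Submodule.span ℂ (Set.range fun a => (Sprod S a : Module.End ℂ N)) = ⊤ := by
  set P := Submodule.span ℂ (Set.range fun a => (Sprod S a : Module.End ℂ N)) with hP
  have hadj := Algebra.adjoin_eq_top_of_forall_invariant
    (Set.range fun i => (S i : Module.End ℂ N))
    fun W hW => hN W fun i u hu => hW _ ⟨i, rfl⟩ u hu
  have hmul (x : Module.End ℂ N) : ∀ y ∈ P, x * y ∈ P := by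
    have hx : x ∈ Algebra.adjoin ℂ (Set.range fun i => (S i : Module.End ℂ N)) :=
      hadj ▸ Algebra.mem_top
    induction hx using Algebra.adjoin_induction with
    | mem x hx =>
      obtain ⟨j, rfl⟩ := hx
      intro y hy
      induction hy using Submodule.span_induction with
      | mem y hy =>
        obtain ⟨a, rfl⟩ := hy
        obtain ⟨d, hd⟩ := exists_mul_Sprod hrel j a
        exact hd ▸ P.smul_mem d (Submodule.subset_span ⟨_, rfl⟩)
      | zero => simp
      | add y z _ _ hy hz => rw [mul_add]; exact P.add_mem hy hz
      | smul c y _ hy => rw [mul_smul_comm]; exact P.smul_mem c hy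
    | algebraMap c =>
      intro y hy
      rw [← Algebra.smul_def]
      exact P.smul_mem c hy
    | add x z _ _ hx hz => intro y hy; rw [add_mul]; exact P.add_mem (hx y hy) (hz y hy)
    | mul x z _ _ hx hz => intro y hy; rw [mul_assoc]; exact hx _ (hz y hy)
  refine eq_top_iff.mpr fun x _ => ?_
  have h1 : (1 : Module.End ℂ N) ∈ P :=
    Submodule.subset_span ⟨0, by simp only [Sprod_zero]; rfl⟩
  simpa using hmul x 1 h1

variable {Hhat : Type*} [CommGroup Hhat] [DecidableEq (Hhat →* ℂˣ)]
  (V : (Hhat →* ℂˣ) → Type*) [∀ p, AddCommGroup (V p)] [∀ p, Module ℂ (V p)]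
  (η : Fin r → Hhat)

theorem torusOp_lof_tmul (j : Fin r) (p : Hhat →* ℂˣ) (n : N) (v : V p) :
    torusOp V η S j (DirectSum.lof ℂ _ (fun p => N ⊗[ℂ] V p) p (n ⊗ₜ v)) =
      (p (η j) : ℂ) • DirectSum.lof ℂ _ (fun p => N ⊗[ℂ] V p) p (S j n ⊗ₜ v) := by
  simp [torusOp, DirectSum.toModule_lof, TensorProduct.tmul_smul]

theorem homogOp_lof_tmul (γ : (Fin r → ℤ) → (Hhat →* ℂˣ)) (h : Hhat →* ℂˣ) (a : Fin r → ℤ)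
    (f : ∀ p : Hhat →* ℂˣ, V p →ₗ[ℂ] V (p * h * γ a)) (p : Hhat →* ℂˣ) (n : N) (v : V p) :
    homogOp V S γ h a f (DirectSum.lof ℂ _ (fun p => N ⊗[ℂ] V p) p (n ⊗ₜ v)) =
      DirectSum.lof ℂ _ (fun p => N ⊗[ℂ] V p) (p * h * γ a) (Sprod S a n ⊗ₜ f p v) := by
  simp [homogOp, DirectSum.toModule_lof]

variable {V} in
theorem DirectSum.linearMap_ext_tmul {P : Type*} [AddCommGroup P] [Module ℂ P]
    {X Y : (⨁ p : Hhat →* ℂˣ, N ⊗[ℂ] V p) →ₗ[ℂ] P}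
    (h : ∀ p (n : N) (v : V p), X (DirectSum.lof ℂ _ (fun p => N ⊗[ℂ] V p) p (n ⊗ₜ v)) =
      Y (DirectSum.lof ℂ _ (fun p => N ⊗[ℂ] V p) p (n ⊗ₜ v))) : X = Y :=
  DirectSum.linearMap_ext ℂ fun p => TensorProduct.ext' fun n v => h p n v

variable {S q} in
theorem torusOp_mul_torusOp (hrel : ∀ i j, ((S i : Module.End ℂ N) * S j) =
      (q i j : ℂ) • ((S j : Module.End ℂ N) * S i)) (i j : Fin r) :
    (torusOp V η S i : Module.End ℂ _) * torusOp V η S j =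
      (q i j : ℂ) • ((torusOp V η S j : Module.End ℂ _) * torusOp V η S i) := by
  refine DirectSum.linearMap_ext_tmul fun p n v => ?_
  have hn : S i (S j n) = (q i j : ℂ) • S j (S i n) := congr($(hrel i j) n)
  simp only [LinearMap.smul_apply, Module.End.mul_apply, torusOp_lof_tmul, map_smul, hn,
    smul_smul]
  simp only [← TensorProduct.smul_tmul', map_smul, smul_smul]
  congr 1
  ring

/-- `torusOp` as a unit of the endomorphism ring. -/
noncomputable def torusUnit (j : Fin r) : (Module.End ℂ (⨁ p : Hhat →* ℂˣ, N ⊗[ℂ] V p))ˣ where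
  val := torusOp V η S j
  inv := torusOp V (fun i => (η i)⁻¹) (fun i => (S i).symm) j
  val_inv := by
    refine DirectSum.linearMap_ext_tmul fun p n v => ?_
    simp [torusOp_lof_tmul, smul_smul]
  inv_val := by
    refine DirectSum.linearMap_ext_tmul fun p n v => ?_
    simp [torusOp_lof_tmul, smul_smul]

variable {S q η} in
theorem homogOp_mem_conjEigenspace (hrel : ∀ i j, ((S i : Module.End ℂ N) * S j) =
      (q i j : ℂ) • ((S j : Module.End ℂ N) * S i))
    (hqinv : ∀ i j, q i j = (q j i)⁻¹) (γ : (Fin r → ℤ) → (Hhat →* ℂˣ))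
    (hγ : ∀ a j, γ a (η j) = ∏ i, q i j ^ a i) (h : Hhat →* ℂˣ) (a : Fin r → ℤ)
    (f : ∀ p : Hhat →* ℂˣ, V p →ₗ[ℂ] V (p * h * γ a)) :
    (homogOp V S γ h a f : Module.End ℂ _) ∈
      conjEigenspace (torusOp V η S : Fin r → Module.End ℂ _) fun j => (h (η j) : ℂ) := by
  intro j
  refine DirectSum.linearMap_ext_tmul fun p n v => ?_
  have hn : S j (Sprod S a n) = (((γ a (η j))⁻¹ : ℂˣ) : ℂ) • Sprod S a (S j n) := by
    have : (γ a (η j))⁻¹ = ∏ i, q j i ^ a i := by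
      rw [hγ, ← Finset.prod_inv_distrib]
      exact Finset.prod_congr rfl fun i _ => by rw [hqinv j i, inv_zpow]
    rw [this]
    exact congr($(mul_Sprod hrel j a) n)
  simp only [LinearMap.smul_apply, Module.End.mul_apply, torusOp_lof_tmul, homogOp_lof_tmul,
    map_smul, hn, ← TensorProduct.smul_tmul', smul_smul, MonoidHom.mul_apply, Units.val_mul]
  congr 1
  rw [mul_assoc, Units.mul_inv, mul_one, mul_comm]

theorem homogOp_update (γ : (Fin r → ℤ) → (Hhat →* ℂˣ)) (h : Hhat →* ℂˣ) (a : Fin r → ℤ)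
    (p : Hhat →* ℂˣ) (g : V p →ₗ[ℂ] V (p * h * γ a)) :
    homogOp V S γ h a (Function.update (fun _ => 0) p g) =
      DirectSum.lof ℂ _ (fun p => N ⊗[ℂ] V p) (p * h * γ a) ∘ₗ
        TensorProduct.map (Sprod S a : Module.End ℂ N) g ∘ₗ
          DirectSum.component ℂ _ (fun p => N ⊗[ℂ] V p) p := by
  refine DirectSum.linearMap_ext_tmul fun p' n v => ?_
  rw [homogOp_lof_tmul]
  by_cases hp : p' = p
  · subst hp
    simp [DirectSum.component.lof_self]
  · simp [DirectSum.component.of, hp]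

variable {V} in
theorem DirectSum.eq_sum_lof_comp_component
    (X : Module.End ℂ (⨁ p : Hhat →* ℂˣ, N ⊗[ℂ] V p)) [Fintype (Hhat →* ℂˣ)] :
    X = ∑ p, ∑ s, DirectSum.lof ℂ _ (fun p => N ⊗[ℂ] V p) s ∘ₗ
      (DirectSum.component ℂ _ (fun p => N ⊗[ℂ] V p) s ∘ₗ X ∘ₗ
        DirectSum.lof ℂ _ (fun p => N ⊗[ℂ] V p) p) ∘ₗ
          DirectSum.component ℂ _ (fun p => N ⊗[ℂ] V p) p := by
  have hid (x : ⨁ p : Hhat →* ℂˣ, N ⊗[ℂ] V p) : ∑ p, DirectSum.lof ℂ _ (fun p => N ⊗[ℂ] V p) p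
      (DirectSum.component ℂ _ (fun p => N ⊗[ℂ] V p) p x) = x :=
    DirectSum.sum_univ_of x
  refine LinearMap.ext fun x => ?_
  simp only [LinearMap.sum_apply, LinearMap.comp_apply, hid, ← map_sum]

variable {S q} in
theorem iSup_span_homogOp_eq_top [Finite Hhat] [FiniteDimensional ℂ N] [Nontrivial N]
    [∀ p, FiniteDimensional ℂ (V p)]
    (hrel : ∀ i j, ((S i : Module.End ℂ N) * S j) =
      (q i j : ℂ) • ((S j : Module.End ℂ N) * S i))
    (hN : ∀ W : Submodule ℂ N, (∀ i, ∀ u ∈ W, S i u ∈ W) → W = ⊥ ∨ W = ⊤)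
    (γ : (Fin r → ℤ) → (Hhat →* ℂˣ)) :
    ⨆ h : Hhat →* ℂˣ, Submodule.span ℂ
      {X : Module.End ℂ (⨁ p : Hhat →* ℂˣ, N ⊗[ℂ] V p) |
        ∃ (a : Fin r → ℤ) (f : ∀ p : Hhat →* ℂˣ, V p →ₗ[ℂ] V (p * h * γ a)),
          X = homogOp V S γ h a f} = ⊤ := by
  refine eq_top_iff.mpr fun X _ => ?_
  have := Fintype.ofFinite (Hhat →* ℂˣ)
  rw [DirectSum.eq_sum_lof_comp_component X]
  refine Submodule.sum_mem _ fun p _ => Submodule.sum_mem _ fun s _ => ?_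
  generalize DirectSum.component ℂ _ (fun p => N ⊗[ℂ] V p) s ∘ₗ X ∘ₗ
        DirectSum.lof ℂ _ (fun p => N ⊗[ℂ] V p) p = Y
  obtain ⟨t, rfl⟩ := (homTensorHomEquiv ℂ N (V p) N (V s)).surjective Y
  induction t using TensorProduct.induction_on with
  | zero => simp
  | add t t' ht ht' =>
    rw [map_add, LinearMap.add_comp, LinearMap.comp_add]
    exact Submodule.add_mem _ ht ht'
  | tmul φ g =>
    rw [homTensorHomEquiv_apply, TensorProduct.homTensorHomMap_apply]
    have hφ : φ ∈ Submodule.span ℂ (Set.range fun a => (Sprod S a : Module.End ℂ N)) :=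
      span_range_Sprod_eq_top hrel hN ▸ Submodule.mem_top
    induction hφ using Submodule.span_induction with
    | mem φ hφ =>
      obtain ⟨a, rfl⟩ := hφ
      obtain ⟨h, rfl⟩ : ∃ h, s = p * h * γ a := ⟨p⁻¹ * s * (γ a)⁻¹, 
        MonoidHom.ext fun x => by simp [mul_assoc]⟩
      exact Submodule.mem_iSup_of_mem h
        (Submodule.subset_span ⟨a, _, (homogOp_update S V γ h a p g).symm⟩)
    | zero => simp
    | add φ φ' _ _ hφ hφ' =>
      rw [TensorProduct.map_add_left, LinearMap.add_comp, LinearMap.comp_add]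
      exact Submodule.add_mem _ hφ hφ'
    | smul c φ _ hφ =>
      rw [TensorProduct.map_smul_left, LinearMap.smul_comp, LinearMap.comp_smul]
      exact Submodule.smul_mem _ c hφ

end QuantumTorus

/-- Proposition 3.8 (Billig–Lau): let `M = ⊕_{p∈H} N ⊗ V^p` be the isotypic
decomposition of a module over the cyclotomic quantum torus generated by
`T_1, …, T_r` (acting as `S_j ⊗ p(η_j)` on the `p`-component, `N` a simple
torus module), where `H = Hom(Ĥ, ℂ*)` and `γ : ℤ^r → H` is the homomorphism
`γ(a)(η^b) = ∏ q_{ij}^{a_i b_j}`.  Then `End_ℂ(M)` decomposes into the direct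
sum over `h ∈ H` of the simultaneous conjugation eigenspaces with eigenvalues
`h(η_j)`, and the `h`-eigenspace (= `ρ(A_h)`) is exactly
`Σ_{a∈ℤ^r} T^a ⊗ (⊕_{p∈H} Hom_ℂ(V^p, V^{p·h·γ(a)}))`. -/
theorem endomorphism_eigenspace_decomposition
    {Hhat : Type*} [CommGroup Hhat] [Finite Hhat] [DecidableEq (Hhat →* ℂˣ)]
    {N : Type*} [AddCommGroup N] [Module ℂ N] [FiniteDimensional ℂ N]
    (V : (Hhat →* ℂˣ) → Type*) [∀ p, AddCommGroup (V p)] [∀ p, Module ℂ (V p)]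
    [∀ p, FiniteDimensional ℂ (V p)]
    {r : ℕ} (η : Fin r → Hhat) (hgen : Subgroup.closure (Set.range η) = ⊤)
    (S : Fin r → N ≃ₗ[ℂ] N) (q : Fin r → Fin r → ℂˣ)
    (hq1 : ∀ i, q i i = 1) (hqinv : ∀ i j, q i j = (q j i)⁻¹)
    (hqroot : ∀ i j, ∃ n : ℕ, 0 < n ∧ q i j ^ n = 1)
    (hrel : ∀ i j, ((S i : Module.End ℂ N) * S j) =
        (q i j : ℂ) • ((S j : Module.End ℂ N) * S i))
    (hNsimple : Nontrivial N ∧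
      ∀ W : Submodule ℂ N, (∀ i, ∀ u ∈ W, S i u ∈ W) → W = ⊥ ∨ W = ⊤)
    (γ : (Fin r → ℤ) → (Hhat →* ℂˣ))
    (hγadd : ∀ a b : Fin r → ℤ, γ (a + b) = γ a * γ b)
    (hγdef : ∀ a b : Fin r → ℤ, γ a (∏ i, η i ^ b i) = ∏ i, ∏ j, q i j ^ (a i * b j)) :
    (∀ h : Hhat →* ℂˣ,
      {X : (⨁ p : Hhat →* ℂˣ, N ⊗[ℂ] V p) →ₗ[ℂ] ⨁ p : Hhat →* ℂˣ, N ⊗[ℂ] V p |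
          ∀ j, (torusOp V η S j).comp X = (h (η j) : ℂ) • (X.comp (torusOp V η S j))}
        = ↑(Submodule.span ℂ
            {X : (⨁ p : Hhat →* ℂˣ, N ⊗[ℂ] V p) →ₗ[ℂ] ⨁ p : Hhat →* ℂˣ, N ⊗[ℂ] V p |
              ∃ (a : Fin r → ℤ) (f : ∀ p : Hhat →* ℂˣ, V p →ₗ[ℂ] V (p * h * γ a)),
                X = homogOp V S γ h a f})) ∧
    Submodule.span ℂ
      (⋃ h : Hhat →* ℂˣ,
        {X : (⨁ p : Hhat →* ℂˣ, N ⊗[ℂ] V p) →ₗ[ℂ] ⨁ p : Hhat →* ℂˣ, N ⊗[ℂ] V p |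
          ∀ j, (torusOp V η S j).comp X = (h (η j) : ℂ) • (X.comp (torusOp V η S j))})
      = ⊤ := by
  have := hNsimple.1
  have hγη (a : Fin r → ℤ) (j : Fin r) : γ a (η j) = ∏ i, q i j ^ a i := by
    have := hγdef a (Pi.single j 1)
    have hη : ∏ i, η i ^ (Pi.single j 1 : Fin r → ℤ) i = η j := by
      rw [Finset.prod_eq_single j (fun i _ hi => by simp [hi]) (by simp)]
      simp
    rw [hη] at this
    rw [this]
    refine Finset.prod_congr rfl fun i _ => ?_
    rw [Finset.prod_eq_single j (fun k _ hk => by simp [hk]) (by simp)]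
    simp
  have hinj : Function.Injective fun (h : Hhat →* ℂˣ) (j : Fin r) => (h (η j) : ℂ) := by
    intro h h' hh
    refine MonoidHom.eq_of_eqOn_dense hgen ?_
    rintro _ ⟨j, rfl⟩
    exact Units.ext (congrFun hh j)
  have htop := iSup_span_homogOp_eq_top V hrel hNsimple.2 γ
  have heq := eq_conjEigenspace_of_le_of_iSup_eq_top
    (R := Module.End ℂ (⨁ p : Hhat →* ℂˣ, N ⊗[ℂ] V p)) (torusUnit S V η) q
    (torusOp_mul_torusOp V η hrel) _ hinj _ (fun h => Submodule.span_le.mpr <| by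
      rintro _ ⟨a, f, rfl⟩
      exact homogOp_mem_conjEigenspace V hrel hqinv γ hγη h a f) htop
  refine ⟨fun h => congrArg SetLike.coe (heq h).symm, ?_⟩
  rw [Submodule.span_iUnion]
  refine Eq.trans (iSup_congr fun h => ?_) htop
  exact (Submodule.span_eq (conjEigenspace _ _)).trans (heq h).symm
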